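/- For all n > 24, β > (log 3)/(log n), and λ > 1/2, if m = n^{1/2 + β + λ}, then P{ |∑_{i=1}^n k_i(x)(k_i(x)−1)/(m(m−1)) · 1/‖p‖² − 1| ≤ (22/5) n^{−β/2} } ≥ 1 − (10/9) e^{−n^{λ − 1/2}}, where x ∈ U^m is drawn from the product measure. -/

import Mathlib

/-- Number of keys of the sequence `x` (counted with multiplicity) hashed into slot `i`. -/
def kcount {U : Type*} [Fintype U] {n m : ℕ} (h : U → Fin n) (x : Fin m → U) (i : Fin n) : ℕ :=
  (Finset.univ.filter (fun j => h (x j) = i)).card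

/-- Probability of a set `S` of key sequences, under the product measure induced by
the probability mass function `q` on the key space `U`. -/
noncomputable def Pr {U : Type*} [Fintype U] {m : ℕ} (q : U → ℝ) (S : Set (Fin m → U)) : ℝ :=
  ∑ x : Fin m → U, S.indicator (fun y => ∏ j, q (y j)) x

/-- The empirical collision probability `∑ i, k_i(x)(k_i(x) − 1) / (m(m−1))`
of a sequence `x` of `m` keys. -/
noncomputable def collEst {U : Type*} [Fintype U] {n m : ℕ} (h : U → Fin n)
    (x : Fin m → U) : ℝ :=
  ∑ i : Fin n, (kcount h x i : ℝ) * ((kcount h x i : ℝ) - 1) / ((m : ℝ) * ((m : ℝ) - 1))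

open Finset

/-- Expectation of `f` under the product of `m` copies of the mass function `q`. -/
noncomputable def prodExp {U : Type*} [Fintype U] {m : ℕ} (q : U → ℝ)
    (f : (Fin m → U) → ℝ) : ℝ :=
  ∑ x, (∏ j, q (x j)) * f x

section prodExp

variable {U : Type*} [Fintype U] {m : ℕ} {q : U → ℝ}

lemma prodExp_succ (f : (Fin (m + 1) → U) → ℝ) :
    prodExp q f = ∑ u, q u * prodExp q (fun x => f (Fin.cons u x)) := by
  unfold prodExp
  rw [← (Fin.consEquiv (fun _ => U)).sum_comp, Fintype.sum_prod_type]
  refine sum_congr rfl fun u _ => ?_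
  rw [mul_sum]
  refine sum_congr rfl fun x _ => ?_
  simp [Fin.consEquiv, Fin.prod_univ_succ, mul_assoc]

lemma prodExp_zero (f : (Fin 0 → U) → ℝ) : prodExp q f = f default := by
  simp [prodExp]

lemma prodExp_add (f g : (Fin m → U) → ℝ) :
    prodExp q (fun x => f x + g x) = prodExp q f + prodExp q g := by
  simp [prodExp, mul_add, sum_add_distrib]

lemma prodExp_const_mul (c : ℝ) (f : (Fin m → U) → ℝ) :
    prodExp q (fun x => c * f x) = c * prodExp q f := by
  simp only [prodExp, mul_sum]
  exact sum_congr rfl fun x _ => by ring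

lemma prodExp_mono (hq0 : ∀ u, 0 ≤ q u) {f g : (Fin m → U) → ℝ} (hfg : ∀ x, f x ≤ g x) :
    prodExp q f ≤ prodExp q g :=
  sum_le_sum fun x _ => mul_le_mul_of_nonneg_left (hfg x) (prod_nonneg fun _ _ => hq0 _)

lemma prodExp_const (hq1 : ∑ u, q u = 1) (c : ℝ) :
    prodExp q (fun _ : Fin m → U => c) = c := by
  induction m with
  | zero => simp [prodExp_zero]
  | succ m ih => rw [prodExp_succ]; simp [ih, ← sum_mul, hq1]

lemma prodExp_sum_apply (hq1 : ∑ u, q u = 1) (g : U → ℝ) :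
    prodExp q (fun x : Fin m → U => ∑ j, g (x j)) = m * ∑ u, q u * g u := by
  induction m with
  | zero => simp [prodExp_zero]
  | succ m ih =>
    rw [prodExp_succ]
    simp only [Fin.sum_univ_succ, Fin.cons_zero, Fin.cons_succ, prodExp_add, ih,
      prodExp_const hq1, mul_add, sum_add_distrib, ← sum_mul, hq1]
    push_cast; ring

lemma prodExp_sq_le (hq0 : ∀ u, 0 ≤ q u) (hq1 : ∑ u, q u = 1) (f : (Fin m → U) → ℝ) :
    prodExp q f ^ 2 ≤ prodExp q (fun x => f x ^ 2) := by
  have h := prodExp_mono hq0 (f := fun _ => (0 : ℝ))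
    (g := fun x => f x ^ 2 + (-2 * prodExp q f * f x + prodExp q f ^ 2))
    fun x => by nlinarith [sq_nonneg (f x - prodExp q f)]
  rw [prodExp_const hq1, prodExp_add, prodExp_add, prodExp_const_mul, prodExp_const hq1] at h
  linarith

/-- **Hoeffding's lemma** for a mass function on a finite type. -/
lemma sum_mul_exp_le_of_sub_le (hq0 : ∀ u, 0 ≤ q u) (hq1 : ∑ u, q u = 1)
    (g : U → ℝ) (c : ℝ) (hg : ∀ u v, g u - g v ≤ c) :
    ∑ u, q u * Real.exp (g u) ≤ Real.exp (∑ u, q u * g u + c ^ 2 / 8) := by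
  classical
  have hU : Nonempty U := by
    by_contra hne
    rw [not_nonempty_iff] at hne
    simp at hq1
  let _ : MeasurableSpace U := ⊤
  let μ : MeasureTheory.Measure U :=
    ∑ u, ENNReal.ofReal (q u) • MeasureTheory.Measure.dirac u
  have hμ : ∀ f : U → ℝ, ∫ u, f u ∂μ = ∑ u, q u * f u := fun f => by
    rw [MeasureTheory.integral_finsetSum_measure fun u _ =>
      (MeasureTheory.integrable_dirac (by simp)).smul_measure ENNReal.ofReal_ne_top]
    simp [MeasureTheory.integral_smul_measure, ENNReal.toReal_ofReal (hq0 _)]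
  have : MeasureTheory.IsProbabilityMeasure μ := ⟨by
    simp [μ, MeasureTheory.Measure.finsetSum_apply,
      ← ENNReal.ofReal_sum_of_nonneg fun u _ => hq0 u, hq1]⟩
  obtain ⟨v, hv⟩ := Finite.exists_min g
  have hc : 0 ≤ c := by simpa using hg v v
  have hsub := (ProbabilityTheory.hasSubgaussianMGF_of_mem_Icc (μ := μ) (X := g)
    (a := g v) (b := g v + c) measurable_from_top.aemeasurable
    (Filter.Eventually.of_forall fun u => ⟨hv u, by linarith [hg u v]⟩)).mgf_le 1
  simp only [ProbabilityTheory.mgf, hμ, one_mul, add_sub_cancel_left] at hsub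
  simp only [Real.exp_sub, mul_div_assoc'] at hsub
  rw [← sum_div, div_le_iff₀ (Real.exp_pos _), ← Real.exp_add] at hsub
  refine hsub.trans (Real.exp_le_exp.2 ?_)
  simp [abs_of_nonneg hc]
  nlinarith

/-- **McDiarmid's inequality**, exponential moment form. -/
lemma prodExp_exp_le_of_update_sub_le (hq0 : ∀ u, 0 ≤ q u) (hq1 : ∑ u, q u = 1) (c : ℝ)
    (f : (Fin m → U) → ℝ)
    (hf : ∀ x j u v, f (Function.update x j u) - f (Function.update x j v) ≤ c) :
    prodExp q (fun x => Real.exp (f x)) ≤ Real.exp (prodExp q f + m * c ^ 2 / 8) := by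
  induction m with
  | zero => simp [prodExp_zero]
  | succ m ih =>
    rw [prodExp_succ, prodExp_succ]
    set g : U → ℝ := fun u => prodExp q (fun x => f (Fin.cons u x))
    have hg : ∀ u v, g u - g v ≤ c := fun u v => by
      have := prodExp_mono (m := m) hq0 (f := fun x => f (Fin.cons u x))
        (g := fun x => f (Fin.cons v x) + c) fun x => by
          have := hf (Fin.cons v x) 0 u v
          rw [Fin.update_cons_zero, Fin.update_cons_zero] at this
          linarith
      rw [prodExp_add, prodExp_const hq1] at this
      linarith
    calc ∑ u, q u * prodExp q (fun x => Real.exp (f (Fin.cons u x)))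
        ≤ ∑ u, q u * Real.exp (g u + m * c ^ 2 / 8) := by
          refine sum_le_sum fun u _ => mul_le_mul_of_nonneg_left ?_ (hq0 u)
          refine ih (fun x => f (Fin.cons u x)) fun x j v w => ?_
          simpa only [Fin.cons_update] using hf (Fin.cons u x) j.succ v w
      _ = (∑ u, q u * Real.exp (g u)) * Real.exp (m * c ^ 2 / 8) := by
          simp only [Real.exp_add, sum_mul, mul_assoc]
      _ ≤ Real.exp (∑ u, q u * g u + c ^ 2 / 8) * Real.exp (m * c ^ 2 / 8) := by
          gcongr
          exact sum_mul_exp_le_of_sub_le hq0 hq1 g c hg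
      _ = _ := by
          rw [← Real.exp_add]
          congr 1
          push_cast
          ring

/-- Chernoff form of McDiarmid's inequality for unit bounded differences. -/
lemma prodExp_exp_deviation_le (hq0 : ∀ u, 0 ≤ q u) (hq1 : ∑ u, q u = 1) (hm : 0 < m)
    (f : (Fin m → U) → ℝ)
    (hf : ∀ x j u v, f (Function.update x j u) - f (Function.update x j v) ≤ 1)
    {r : ℝ} (hr : 0 ≤ r) :
    prodExp q (fun x => Real.exp (4 * r / m * (f x - prodExp q f - r)))
      ≤ Real.exp (-(2 * r ^ 2 / m)) := by
  have hm' : (0 : ℝ) < m := by exact_mod_cast hm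
  set s : ℝ := 4 * r / m with hs
  have hs0 : 0 ≤ s := by positivity
  have key := prodExp_exp_le_of_update_sub_le (m := m) hq0 hq1 s (fun x => s * f x)
    fun x j u v => by nlinarith [hf x j u v]
  rw [prodExp_const_mul] at key
  have hrw : (fun x => Real.exp (s * (f x - prodExp q f - r)))
      = fun x => Real.exp (-(s * (prodExp q f + r))) * Real.exp (s * f x) := by
    funext x
    rw [← Real.exp_add]
    congr 1
    ring
  rw [hrw, prodExp_const_mul]
  refine (mul_le_mul_of_nonneg_left key (Real.exp_pos _).le).trans_eq ?_
  rw [← Real.exp_add]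
  congr 1
  rw [hs]
  field_simp
  ring

end prodExp

lemma sum_apply_update {U : Type*} {m : ℕ} (g : U → ℝ) (x : Fin m → U) (j : Fin m) (u : U) :
    ∑ l, g (Function.update x j u l) = ∑ l ∈ univ.erase j, g (x l) + g u := by
  rw [← sum_erase_add _ _ (mem_univ j)]
  congr 1
  · exact sum_congr rfl fun l hl => by rw [Function.update_of_ne (ne_of_mem_erase hl)]
  · simp

section kcount

variable {U : Type*} [Fintype U] {n m : ℕ}

lemma kcount_eq_sum (h : U → Fin n) (x : Fin m → U) (i : Fin n) :
    (kcount h x i : ℝ) = ∑ j, if h (x j) = i then 1 else 0 := by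
  simp [kcount]

lemma sum_kcount (h : U → Fin n) (x : Fin m → U) : ∑ i, (kcount h x i : ℝ) = m := by
  simp only [kcount_eq_sum]
  rw [sum_comm]
  simp

lemma sum_mul_kcount (h : U → Fin n) (p : Fin n → ℝ) (x : Fin m → U) :
    ∑ i, p i * kcount h x i = ∑ j, p (h (x j)) := by
  simp only [kcount_eq_sum, mul_sum]
  rw [sum_comm]
  simp

lemma sum_add_ite_sq (r : Fin n → ℝ) (a : Fin n) :
    ∑ i, (r i + if a = i then 1 else 0) ^ 2 = ∑ i, r i ^ 2 + 2 * r a + 1 := by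
  have h (i : Fin n) : (r i + if a = i then 1 else 0) ^ 2
      = r i ^ 2 + if a = i then 2 * r i + 1 else 0 := by
    split_ifs <;> ring
  simp [h, sum_add_distrib]
  ring

/-- Replacing one key changes the Euclidean norm of the counts by at most one. -/
lemma sqrt_sum_kcount_sq_update_sub_le (h : U → Fin n) (x : Fin m → U) (j : Fin m) (u v : U) :
    √(∑ i, (kcount h (Function.update x j u) i : ℝ) ^ 2)
      - √(∑ i, (kcount h (Function.update x j v) i : ℝ) ^ 2) ≤ 1 := by
  set r : Fin n → ℝ := fun i => ∑ l ∈ univ.erase j, if h (x l) = i then 1 else 0 with hr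
  have hr0 : ∀ i, 0 ≤ r i := fun i => sum_nonneg fun l _ => by split_ifs <;> norm_num
  have hN (w : U) : ∑ i, (kcount h (Function.update x j w) i : ℝ) ^ 2
      = ∑ i, r i ^ 2 + 2 * r (h w) + 1 := by
    rw [← sum_add_ite_sq]
    refine sum_congr rfl fun i _ => ?_
    rw [kcount_eq_sum, sum_apply_update (fun w => if h w = i then (1 : ℝ) else 0)]
  have h0 : 0 ≤ ∑ i, r i ^ 2 := sum_nonneg fun i _ => sq_nonneg _
  have hle : r (h u) ≤ √(∑ i, r i ^ 2) :=
    Real.le_sqrt_of_sq_le (single_le_sum (fun i _ => sq_nonneg (r i)) (mem_univ (h u)))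
  have hupper : √(∑ i, r i ^ 2 + 2 * r (h u) + 1) ≤ √(∑ i, r i ^ 2) + 1 := by
    refine Real.sqrt_le_iff.2 ⟨by positivity, ?_⟩
    nlinarith [Real.sq_sqrt h0]
  have hlower : √(∑ i, r i ^ 2) ≤ √(∑ i, r i ^ 2 + 2 * r (h v) + 1) :=
    Real.sqrt_le_sqrt (by linarith [hr0 (h v)])
  rw [hN, hN]
  linarith

lemma sum_mul_apply_hash {q : U → ℝ} (h : U → Fin n)
    {p : Fin n → ℝ} (hp : ∀ i, p i = ∑ u ∈ univ.filter (fun u => h u = i), q u) :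
    ∑ u, q u * p (h u) = ∑ i, p i ^ 2 := by
  rw [← sum_fiberwise univ h]
  refine sum_congr rfl fun i _ => ?_
  rw [sq]
  nth_rewrite 2 [hp i]
  rw [mul_sum]
  refine sum_congr rfl fun u hu => ?_
  rw [(mem_filter.1 hu).2, mul_comm]

lemma prodExp_sum_kcount_sq {q : U → ℝ} (hq1 : ∑ u, q u = 1) (h : U → Fin n)
    {p : Fin n → ℝ} (hp : ∀ i, p i = ∑ u ∈ univ.filter (fun u => h u = i), q u) :
    prodExp q (fun x : Fin m → U => ∑ i, (kcount h x i : ℝ) ^ 2)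
      = m * (m - 1) * ∑ i, p i ^ 2 + m := by
  have hk (m : ℕ) (i : Fin n) :
      prodExp q (fun x : Fin m → U => (kcount h x i : ℝ)) = m * p i := by
    simp only [kcount_eq_sum]
    rw [prodExp_sum_apply hq1 (fun u => if h u = i then (1 : ℝ) else 0), hp, sum_filter]
    simp
  induction m with
  | zero => simp [prodExp_zero, kcount]
  | succ m ih =>
    have hcons (u : U) (x : Fin m → U) :
        ∑ i, (kcount h (Fin.cons u x : Fin (m + 1) → U) i : ℝ) ^ 2
          = ∑ i, (kcount h x i : ℝ) ^ 2 + (2 * kcount h x (h u) + 1) := by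
      rw [← add_assoc, ← sum_add_ite_sq]
      refine sum_congr rfl fun i _ => ?_
      rw [kcount_eq_sum, kcount_eq_sum, Fin.sum_univ_succ, add_comm]
      simp
    rw [prodExp_succ]
    simp only [hcons, prodExp_add, prodExp_const_mul, ih, hk, prodExp_const hq1,
      mul_add, sum_add_distrib, ← sum_mul, hq1]
    have : ∑ u, q u * (2 * (m * p (h u))) = 2 * m * ∑ i, p i ^ 2 := by
      rw [← sum_mul_apply_hash h hp, mul_sum]
      exact sum_congr rfl fun u _ => by ring
    rw [this]
    push_cast
    ring

lemma collEst_eq (h : U → Fin n) (x : Fin m → U) :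
    collEst h x = (∑ i, (kcount h x i : ℝ) ^ 2 - m) / (m * (m - 1)) := by
  rw [collEst, ← sum_div, ← sum_kcount h x, ← sum_sub_distrib]
  congr 1
  exact sum_congr rfl fun i _ => by ring

lemma collEst_nonneg (hm : 2 ≤ m) (h : U → Fin n) (x : Fin m → U) : 0 ≤ collEst h x := by
  have hm' : (2 : ℝ) ≤ m := by exact_mod_cast hm
  refine sum_nonneg fun i _ => div_nonneg ?_ (by nlinarith)
  rcases Nat.eq_zero_or_pos (kcount h x i) with h0 | h0
  · simp [h0]
  · have : (1 : ℝ) ≤ kcount h x i := by exact_mod_cast h0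
    nlinarith

end kcount

/-- If `N ^ 2` is the sum of squared counts, then one-sided bounds on `N` control the relative
error of the collision estimator `X`. -/
lemma abs_mul_inv_sub_one_le {X N A r m P ρ b : ℝ} (hm : 75 ≤ m) (hρ : 0 < ρ) (hP : P = ρ ^ 2)
    (hb : 3 ≤ b ^ 2) (hb0 : 0 < b) (hX0 : 0 ≤ X) (hX : X = (N ^ 2 - m) / (m * (m - 1)))
    (hA : A ^ 2 ≤ m * (m - 1) * P + m) (hr : 0 ≤ r) (hrb : r * b ≤ m * ρ)
    (hmP : b ^ 2 ≤ m * P) (hN0 : 0 ≤ N) (hupper : N ≤ A + r) (hlower : m * ρ - r ≤ N) :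
    |X * (1 / P) - 1| ≤ 22 / 5 * (1 / b) := by
  have hP0 : 0 < P := hP ▸ by positivity
  have hm1 : 0 < m * (m - 1) := by nlinarith
  have hXN : X * (m * (m - 1)) = N ^ 2 - m := by rw [hX, div_mul_cancel₀ _ hm1.ne']
  have hb1 : 1.7 ≤ b := by nlinarith
  set e := 1 / b with he
  have heb : e * b = 1 := by rw [he]; field_simp
  have he0 : 0 < e := by positivity
  have he1 : e ≤ 0.59 := by nlinarith
  have he2 : e ^ 2 ≤ 1 / 3 := by
    rw [he, div_pow, one_pow]
    exact one_div_le_one_div_of_le (by norm_num) hb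
  obtain ⟨M, hM⟩ : ∃ M, M = m * ρ := ⟨_, rfl⟩
  have hM0 : 0 < M := hM ▸ by positivity
  have hM2 : M ^ 2 = m ^ 2 * P := by rw [hM, hP]; ring
  rw [← hM] at hrb hlower
  have hre : r ≤ M * e := by
    rw [he, mul_one_div, le_div_iff₀ hb0]; exact hrb
  have hme : m ≤ M ^ 2 * e ^ 2 := by
    calc m = m * (e * b) ^ 2 := by rw [heb]; ring
      _ = m * e ^ 2 * b ^ 2 := by ring
      _ ≤ m * e ^ 2 * (m * P) := by gcongr
      _ = _ := by rw [hM2]; ring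
  have hmul : X * (1 / P) - 1 = (X - P) / P := by field_simp
  rw [hmul, abs_le, le_div_iff₀ hP0, div_le_iff₀ hP0]
  have hPe : 0 < P * e := mul_pos hP0 he0
  constructor
  · have h1 : M * (1 - e) ≤ N := by linarith
    have h2 : (M * (1 - e)) ^ 2 ≤ N ^ 2 :=
      pow_le_pow_left₀ (mul_nonneg hM0.le (by linarith)) h1 2
    have h3 : N ^ 2 - m ≤ m ^ 2 * X := by
      rw [← hXN]
      linarith [mul_nonneg hX0 (by linarith : 0 ≤ m)]
    have h4 : m ^ 2 * (P * (1 - 2 * e)) ≤ m ^ 2 * X := by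
      calc m ^ 2 * (P * (1 - 2 * e)) = (M * (1 - e)) ^ 2 - M ^ 2 * e ^ 2 := by
            rw [← mul_assoc, ← hM2]; ring
        _ ≤ _ := by linarith
    linarith [le_of_mul_le_mul_left h4 (by positivity)]
  · have hA' : A ≤ 1.16 * M := by
      refine le_of_sq_le_sq ?_ (by positivity)
      have : M ^ 2 * e ^ 2 ≤ M ^ 2 * (1 / 3) := by gcongr
      have : m * (m - 1) * P ≤ M ^ 2 := by
        rw [hM2]
        linarith [mul_pos (by linarith : 0 < m) hP0]
      linarith [sq_nonneg M]
    have h1 : N ^ 2 ≤ (A + r) ^ 2 := pow_le_pow_left₀ hN0 hupper 2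
    have h2 : A * r ≤ 1.16 * M * (M * e) := by gcongr
    have h3 : r ^ 2 ≤ (M * e) ^ 2 := by gcongr
    have h4 : N ^ 2 - m ≤ m * (m - 1) * P + M ^ 2 * (2.32 * e + e ^ 2) := by
      linarith
    have h5 : M ^ 2 * (2.32 * e + e ^ 2) ≤ m * (m - 1) * P * (22 / 5 * e) := by
      have h7 : m * (2.32 + e) ≤ (m - 1) * (22 / 5) := by nlinarith
      calc M ^ 2 * (2.32 * e + e ^ 2) = m * P * e * (m * (2.32 + e)) := by rw [hM2]; ring
        _ ≤ m * P * e * ((m - 1) * (22 / 5)) := by gcongr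
        _ = _ := by ring
    have h6 : X * (m * (m - 1)) ≤ (P + 22 / 5 * e * P) * (m * (m - 1)) := by
      rw [hXN]; linarith
    linarith [le_of_mul_le_mul_right h6 hm1]

/-- Corollary 7 of the paper: For all `n > 24`, `β > (log 3)/(log n)`,
`λ > 1/2`, if `m = n^(1/2 + β + λ)`, then with probability at least
`1 − (10/9) e^(−n^(λ−1/2))` the empirical collision probability estimates `‖p‖²`
within relative error `(22/5) n^(−β/2)`. -/
theorem collision_estimator_cor3
    {U : Type*} [Fintype U] [Nonempty U]
    (n : ℕ) (hn : 24 < n)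
    (q : U → ℝ) (hq0 : ∀ u, 0 ≤ q u) (hq1 : ∑ u, q u = 1)
    (h : U → Fin n)
    (p : Fin n → ℝ)
    (hp : ∀ i, p i = ∑ u ∈ Finset.univ.filter (fun u => h u = i), q u)
    (m : ℕ) (hm : 2 ≤ m)
    (β lam : ℝ) (hβ : Real.log 3 / Real.log n < β) (hlam : 1 / 2 < lam)
    (hmn : (m : ℝ) = (n : ℝ) ^ ((1 : ℝ) / 2 + β + lam)) :
    1 - (10 / 9) * Real.exp (-(n : ℝ) ^ (lam - 1 / 2))
      ≤ Pr q {x : Fin m → U |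
          |collEst h x * (1 / ∑ i : Fin n, p i ^ 2) - 1|
            ≤ (22 / 5) * (n : ℝ) ^ (-β / 2)} := by
  have hn' : (25 : ℝ) ≤ n := by exact_mod_cast hn
  have hn0 : (0 : ℝ) < n := by linarith
  set t : ℝ := (n : ℝ) ^ (lam - 1 / 2) with ht
  have ht1 : 1 ≤ t := Real.one_le_rpow (by linarith) (by linarith)
  set b : ℝ := (n : ℝ) ^ (β / 2) with hb
  have hb0 : 0 < b := Real.rpow_pos_of_pos hn0 _
  have hb2 : b ^ 2 = (n : ℝ) ^ β := by
    rw [hb, ← Real.rpow_natCast, ← Real.rpow_mul hn0.le]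
    congr 1
    push_cast
    ring
  have hb3 : 3 ≤ b ^ 2 := by
    rw [hb2, Real.le_rpow_iff_log_le (by norm_num) hn0]
    exact ((div_lt_iff₀ (Real.log_pos (by linarith))).1 hβ).le
  have hbinv : (n : ℝ) ^ (-β / 2) = 1 / b := by
    rw [neg_div, Real.rpow_neg hn0.le, one_div]
  have hmt : (m : ℝ) = n * b ^ 2 * t := by
    rw [hmn, hb2, ht, show (1 : ℝ) / 2 + β + lam = 1 + β + (lam - 1 / 2) by ring,
      Real.rpow_add hn0, Real.rpow_add hn0, Real.rpow_one]
  have hm75 : (75 : ℝ) ≤ m := by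
    have : (75 : ℝ) ≤ n * b ^ 2 := by nlinarith
    rw [hmt]; nlinarith
  have hm0 : (0 : ℝ) < m := by linarith
  have hp0 : ∀ i, 0 ≤ p i := fun i => hp i ▸ sum_nonneg fun u _ => hq0 u
  have hpsum : ∑ i, p i = 1 := by
    simp only [hp]
    rw [sum_fiberwise, hq1]
  set P : ℝ := ∑ i, p i ^ 2 with hPdef
  have hnP : 1 ≤ n * P := by
    have := sq_sum_le_card_mul_sum_sq (s := univ) (f := p)
    simpa [hpsum] using this
  have hP0 : 0 < P := by
    by_contra hcon
    nlinarith
  set ρ : ℝ := √P with hρdef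
  have hρ : 0 < ρ := Real.sqrt_pos.2 hP0
  have hρ2 : P = ρ ^ 2 := (Real.sq_sqrt hP0.le).symm
  have hpρ : ∀ i, p i ≤ ρ := fun i =>
    Real.le_sqrt_of_sq_le (single_le_sum (fun i _ => sq_nonneg (p i)) (mem_univ i))
  set r : ℝ := √(t * m) with hrdef
  have hr2 : r ^ 2 = t * m := Real.sq_sqrt (by positivity)
  have hr0 : 0 ≤ r := Real.sqrt_nonneg _
  have hexp : 2 * r ^ 2 / m = 2 * t := by rw [hr2]; field_simp
  let N : (Fin m → U) → ℝ := fun x => √(∑ i, (kcount h x i : ℝ) ^ 2)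
  have hN2 : ∀ x, N x ^ 2 = ∑ i, (kcount h x i : ℝ) ^ 2 := fun x =>
    Real.sq_sqrt (sum_nonneg fun i _ => sq_nonneg _)
  let L : (Fin m → U) → ℝ := fun x => ∑ j, -(p (h (x j)) / ρ)
  have hL : ∀ x, -L x ≤ N x := fun x => by
    have hcs := Real.sum_mul_le_sqrt_mul_sqrt univ p fun i => (kcount h x i : ℝ)
    rw [sum_mul_kcount] at hcs
    simp only [L, sum_neg_distrib, neg_neg, ← sum_div]
    rw [div_le_iff₀' hρ]
    exact hcs
  have hEN : prodExp q N ^ 2 ≤ m * (m - 1) * P + m := by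
    refine (prodExp_sq_le hq0 hq1 N).trans_eq ?_
    simp only [hN2]
    exact prodExp_sum_kcount_sq hq1 h hp
  have hEL : prodExp q L = -(m * ρ) := by
    rw [prodExp_sum_apply hq1 fun u => -(p (h u) / ρ)]
    simp only [mul_neg, sum_neg_distrib, mul_div_assoc', ← sum_div, sum_mul_apply_hash h hp,
      ← hPdef]
    rw [hρ2]
    field_simp
  have hupper := prodExp_exp_deviation_le hq0 hq1 (by omega) N
    (fun x j u v => sqrt_sum_kcount_sq_update_sub_le h x j u v) hr0
  have hlower := prodExp_exp_deviation_le hq0 hq1 (by omega) L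
    (fun x j u v => by
      simp only [L]
      rw [sum_apply_update (fun u => -(p (h u) / ρ)), sum_apply_update (fun u => -(p (h u) / ρ))]
      have h1 : p (h v) / ρ ≤ 1 := (div_le_one hρ).2 (hpρ _)
      have h2 : 0 ≤ p (h u) / ρ := div_nonneg (hp0 _) hρ.le
      linarith) hr0
  rw [hexp] at hupper hlower
  set S : Set (Fin m → U) := {x | |collEst h x * (1 / P) - 1| ≤ 22 / 5 * (n : ℝ) ^ (-β / 2)}
    with hS
  have hgood : ∀ x, N x ≤ prodExp q N + r → L x ≤ prodExp q L + r → x ∈ S := fun x h1 h2 => by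
    rw [hS, Set.mem_ofPred_eq, hbinv]
    refine abs_mul_inv_sub_one_le (N := N x) hm75 hρ hρ2 hb3 hb0 (collEst_nonneg hm h x)
      (by rw [collEst_eq, hN2]) hEN hr0 ?_ ?_ (Real.sqrt_nonneg _) h1 ?_
    · refine le_of_sq_le_sq ?_ (by positivity)
      rw [mul_pow, mul_pow, ← hρ2, hr2]
      calc t * m * b ^ 2 = m * (t * b ^ 2) * 1 := by ring
        _ ≤ m * (t * b ^ 2) * (n * P) := by gcongr
        _ = m * (n * b ^ 2 * t) * P := by ring
        _ = _ := by rw [← hmt]; ring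
    · calc b ^ 2 = b ^ 2 * 1 * 1 := by ring
        _ ≤ b ^ 2 * t * (n * P) := by gcongr
        _ = n * b ^ 2 * t * P := by ring
        _ = _ := by rw [← hmt]
    · linarith [hL x]
  have hs : 0 ≤ 4 * r / m := by positivity
  have hcover := prodExp_mono (m := m) hq0 (f := fun _ => 1)
    (g := fun x => S.indicator 1 x + (Real.exp (4 * r / m * (N x - prodExp q N - r))
      + Real.exp (4 * r / m * (L x - prodExp q L - r)))) fun x => by
    have e1 := Real.exp_pos (4 * r / m * (N x - prodExp q N - r))
    have e2 := Real.exp_pos (4 * r / m * (L x - prodExp q L - r))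
    have hi : 0 ≤ S.indicator (1 : (Fin m → U) → ℝ) x :=
      Set.indicator_nonneg (fun _ _ => zero_le_one) x
    by_cases h1 : N x ≤ prodExp q N + r
    · by_cases h2 : L x ≤ prodExp q L + r
      · rw [Set.indicator_of_mem (hgood x h1 h2), Pi.one_apply]
        linarith
      · linarith [Real.one_le_exp (mul_nonneg hs
          (by linarith : 0 ≤ L x - prodExp q L - r))]
    · linarith [Real.one_le_exp (mul_nonneg hs
        (by linarith : 0 ≤ N x - prodExp q N - r))]
  rw [prodExp_const hq1, prodExp_add, prodExp_add] at hcover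
  have hPr : prodExp q (S.indicator 1) = Pr q S := by
    refine sum_congr rfl fun x _ => ?_
    by_cases hx : x ∈ S <;> simp [hx]
  have he : Real.exp (-(2 * t)) = Real.exp (-t) * Real.exp (-t) := by
    rw [← Real.exp_add]; ring_nf
  have he1 : Real.exp (-t) ≤ 1 / 2 := by
    rw [Real.exp_neg, one_div]
    exact inv_anti₀ (by norm_num) (by linarith [Real.add_one_le_exp t])
  rw [← hPr]
  nlinarith [Real.exp_pos (-t)]
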